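/- In the constrained minimax setting, let x̄ be feasible for (w̄,v̄) (i.e., Υ(x̄,w̄) ∈ Z), set z̄₁ := Ξ(x̄,w̄), z̄₂ := Υ(x̄,w̄), z̄ := (z̄₁,z̄₂), and let v̄ ∈ ∂θ(z̄) for the CPWL function θ associated with the minimax problem. Then the nondegeneracy condition ∂²θ(z̄,v̄)(0) ∩ ker ∇_xΦ(x̄,w̄)* = {0} (equivalently S(z̄) ∩ ker ∇_xΦ(x̄,w̄)* = {0}) holds if and only if 𝒟 ∩ ker(∇_xΞ(x̄,w̄)*, ∇_xΥ(x̄,w̄)*) = {0}, i.e., the only pair (y₁,y₂) with y₁ ∈ span{e_i − e_j : i,j ∈ 𝒦(z̄₁)}, y₂ ∈ span{c_t : t ∈ ℐ(z̄₂)}, and ∇_xΞ(x̄,w̄)*y₁ + ∇_xΥ(x̄,w̄)*y₂ = 0 is (y₁,y₂) = (0,0). -/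

import Mathlib

noncomputable section
open Set Filter Topology Metric
open scoped RealInnerProductSpace Pointwise NNReal Classical

/-- `Euc m` is the Euclidean space `ℝ^m`. -/
abbrev Euc (m : ℕ) := EuclideanSpace ℝ (Fin m)

variable {F G : Type*} [NormedAddCommGroup F] [InnerProductSpace ℝ F]
  [NormedAddCommGroup G] [InnerProductSpace ℝ G]

/-- The (convex) subdifferential of an extended-real-valued function:
`∂θ(z) = {v : θ(z') ≥ θ(z) + ⟨v, z' - z⟩ for all z'}`. -/
def subdiff (θ : F → EReal) (z : F) : Set F :=
  {v | ∀ z', θ z + ((⟪v, z' - z⟫ : ℝ) : EReal) ≤ θ z'}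

/-- The Fréchet (regular) normal cone to `Ω` at `x`:
vectors `v` with `limsup_{y → x, y ∈ Ω} ⟨v, y - x⟩ / ‖y - x‖ ≤ 0`. -/
def frechetNormal (Ω : Set F) (x : F) : Set F :=
  {v | Filter.limsup (fun y => ⟪v, y - x⟫ / ‖y - x‖) (𝓝[Ω] x) ≤ 0}

/-- The limiting (Mordukhovich) normal cone to `Ω` at `x`. -/
def limitingNormal (Ω : Set F) (x : F) : Set F :=
  {v | ∃ xs vs : ℕ → F, (∀ k, xs k ∈ Ω) ∧ Filter.Tendsto xs Filter.atTop (𝓝 x) ∧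
    Filter.Tendsto vs Filter.atTop (𝓝 v) ∧ ∀ k, vs k ∈ frechetNormal Ω (xs k)}

/-- Pairing into the `ℓ²`-product of two inner product spaces. -/
def pl2 (x : F) (y : G) : WithLp 2 (F × G) := (WithLp.equiv 2 (F × G)).symm (x, y)

/-- The second-order subdifferential (generalized Hessian)
`∂²θ(z,v)(u) = {w : (w,-u) ∈ N((z,v); gph ∂θ)}`. -/
def sosd (θ : F → EReal) (z v : F) (u : F) : Set F :=
  {w | pl2 w (-u) ∈ limitingNormal
    {q : WithLp 2 (F × F) | ((WithLp.equiv 2 (F × F)) q).2 ∈ subdiff θ ((WithLp.equiv 2 (F × F)) q).1}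
    (pl2 z v)}

/-- The polyhedral domain `{z : ⟨d i, z⟩ ≤ β i for all i}` of a CPWL function. -/
def cpwlDom {m p : ℕ} (d : Fin p → Euc m) (β : Fin p → ℝ) : Set (Euc m) :=
  {z | ∀ i, ⟪d i, z⟫ ≤ β i}

/-- The CPWL function determined by the data `(a, α, d, β)`:
`θ(z) = max_i (⟨a i, z⟩ - α i)` on its polyhedral domain and `+∞` outside. -/
def cpwlFun {m l p : ℕ} (a : Fin l → Euc m) (α : Fin l → ℝ) (d : Fin p → Euc m)
    (β : Fin p → ℝ) : Euc m → EReal :=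
  fun z => if z ∈ cpwlDom d β then (((⨆ i, (⟪a i, z⟫ - α i)) : ℝ) : EReal) else ⊤

/-- Active indices of the max expression at `z`. -/
def Kact {m l p : ℕ} (a : Fin l → Euc m) (α : Fin l → ℝ) (d : Fin p → Euc m) (β : Fin p → ℝ)
    (z : Euc m) : Set (Fin l) :=
  {i | cpwlFun a α d β z = ((⟪a i, z⟫ - α i : ℝ) : EReal)}

/-- Active indices of the domain inequalities at `z`. -/
def Iact {m p : ℕ} (d : Fin p → Euc m) (β : Fin p → ℝ) (z : Euc m) : Set (Fin p) :=
  {i | ⟪d i, z⟫ = β i}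

/-- Convex conic hull: all finite nonnegative combinations of elements of `s`. -/
def coneHull (s : Set F) : Set F :=
  {x | ∃ (n : ℕ) (c : Fin n → ℝ) (y : Fin n → F), (∀ i, 0 ≤ c i) ∧ (∀ i, y i ∈ s) ∧
    x = ∑ i, c i • y i}

/-- `Spar θ z` is the linear subspace parallel to the affine hull of `∂θ(z)`. -/
def Spar (θ : F → EReal) (z : F) : Submodule ℝ F := (affineSpan ℝ (subdiff θ z)).direction

/-- A convex polyhedron: a finite intersection of closed halfspaces. -/
def IsPolyhedron {V : Type*} [AddCommGroup V] [Module ℝ V] (C : Set V) : Prop :=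
  ∃ (N : ℕ) (f : Fin N → V →ₗ[ℝ] ℝ) (b : Fin N → ℝ), C = {x | ∀ i, f i x ≤ b i}

/-- A proper convex piecewise linear function with values in `ℝ ∪ {+∞}`:
its epigraph is a convex polyhedron, it never takes the value `-∞`, and it is
not identically `+∞`. -/
def IsCPWL {V : Type*} [AddCommGroup V] [Module ℝ V] (f : V → EReal) : Prop :=
  IsPolyhedron {xt : V × ℝ | f xt.1 ≤ (xt.2 : EReal)} ∧ (∀ x, f x ≠ ⊥) ∧ (∃ x, f x ≠ ⊤)

/-- Local argmin set `M_γ(w,v)` of `x ↦ φ(x,w) - ⟨v,x⟩` over the ball `‖x - xb‖ ≤ γ`,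
with the convention that minimizers at which the objective is `+∞` are discarded. -/
def argminLoc {n d : ℕ} (φ : Euc n → Euc d → EReal) (xb : Euc n) (γ : ℝ) (w : Euc d)
    (v : Euc n) : Set (Euc n) :=
  {x | ‖x - xb‖ ≤ γ ∧ φ x w ≠ ⊤ ∧
    ∀ y, ‖y - xb‖ ≤ γ → φ x w - ((⟪v, x⟫ : ℝ) : EReal) ≤ φ y w - ((⟪v, y⟫ : ℝ) : EReal)}

/-- Local optimal value `m_γ(w,v)` of `x ↦ φ(x,w) - ⟨v,x⟩` over the ball `‖x - xb‖ ≤ γ`. -/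
def infLoc {n d : ℕ} (φ : Euc n → Euc d → EReal) (xb : Euc n) (γ : ℝ) (w : Euc d)
    (v : Euc n) : EReal :=
  ⨅ x ∈ {x : Euc n | ‖x - xb‖ ≤ γ}, (φ x w - ((⟪v, x⟫ : ℝ) : EReal))

/-- `xb` is a fully stable locally optimal solution of
`minimize φ(x,wb) - ⟨vb,x⟩` : for some `γ > 0` and neighborhoods `W × V` of `(wb,vb)`,
the local argmin map is single-valued and Lipschitz with value `xb` at `(wb,vb)`, and the
local optimal value function is finite and Lipschitz. -/
def FullyStableSol {n d : ℕ} (φ : Euc n → Euc d → EReal) (xb : Euc n) (wb : Euc d)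
    (vb : Euc n) : Prop :=
  ∃ γ > (0 : ℝ), ∃ W ∈ 𝓝 wb, ∃ V ∈ 𝓝 vb,
    (∃ σ : Euc d × Euc n → Euc n,
      (∃ K : ℝ≥0, LipschitzOnWith K σ (W ×ˢ V)) ∧
      (∀ w ∈ W, ∀ v ∈ V, argminLoc φ xb γ w v = {σ (w, v)}) ∧ σ (wb, vb) = xb) ∧
    (∃ μ : Euc d × Euc n → ℝ,
      (∃ K : ℝ≥0, LipschitzOnWith K μ (W ×ˢ V)) ∧
      ∀ w ∈ W, ∀ v ∈ V, infLoc φ xb γ w v = ((μ (w, v) : ℝ) : EReal))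

/-- The partial limiting subdifferential `∂ₓψ(x,w)` defined through the limiting normal
cone to the epigraph of `ψ(·,w)`. -/
def partialSubdiffX {n d : ℕ} (ψ : Euc n → Euc d → EReal) (x : Euc n) (w : Euc d) :
    Set (Euc n) :=
  {v | ∃ r : ℝ, ψ x w = (r : EReal) ∧
    pl2 v (-1 : ℝ) ∈ limitingNormal
      {q : WithLp 2 (Euc n × ℝ) |
        ψ ((WithLp.equiv 2 (Euc n × ℝ)) q).1 w ≤ ((((WithLp.equiv 2 (Euc n × ℝ)) q).2 : ℝ) : EReal)}
      (pl2 x r)}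

/-- The coderivative `D*∂ₓψ(xb,wb,qb)(u)` of the partial subdifferential mapping,
via the limiting normal cone to its graph in `ℝ^n × ℝ^d × ℝ^n`. -/
def coderivPartialSubdiffX {n d : ℕ} (ψ : Euc n → Euc d → EReal) (xb : Euc n) (wb : Euc d)
    (qb : Euc n) (u : Euc n) : Set (Euc n × Euc d) :=
  {P | pl2 (pl2 P.1 P.2) (-u) ∈ limitingNormal
    {t : WithLp 2 (WithLp 2 (Euc n × Euc d) × Euc n) |
      ((WithLp.equiv 2 (WithLp 2 (Euc n × Euc d) × Euc n)) t).2 ∈ partialSubdiffX ψ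
        ((WithLp.equiv 2 (Euc n × Euc d)) (((WithLp.equiv 2 (WithLp 2 (Euc n × Euc d) × Euc n)) t).1)).1
        ((WithLp.equiv 2 (Euc n × Euc d)) (((WithLp.equiv 2 (WithLp 2 (Euc n × Euc d) × Euc n)) t).1)).2}
    (pl2 (pl2 xb wb) qb)}

/-- Partial Hessian in `x` : the derivative in `x` of the partial gradient in `x`. -/
def hessXX {n d : ℕ} (g : Euc n → Euc d → ℝ) (xb : Euc n) (wb : Euc d) : Euc n →L[ℝ] Euc n :=
  fderiv ℝ (fun x => gradient (fun x' => g x' wb) x) xb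

/-- Mixed partial Hessian: derivative in `w` of the partial gradient in `x`. -/
def hessWX {n d : ℕ} (g : Euc n → Euc d → ℝ) (xb : Euc n) (wb : Euc d) : Euc d →L[ℝ] Euc n :=
  fderiv ℝ (fun w => gradient (fun x' => g x' w) xb) wb

/-- The inner mapping `Ξ(x,w) = (φ_1(x,w),…,φ_l(x,w))` of the minimax problem. -/
def mmXi {n d l : ℕ} (φs : Fin l → Euc n × Euc d → ℝ) (q : Euc n × Euc d) : Euc l :=
  (EuclideanSpace.equiv (Fin l) ℝ).symm (fun i => φs i q)

/-- The constraint mapping `Υ(x,w) = (ζ_1(x,w),…,ζ_r(x,w))` of the minimax problem. -/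
def mmUps {n d r : ℕ} (ζs : Fin r → Euc n × Euc d → ℝ) (q : Euc n × Euc d) : Euc r :=
  (EuclideanSpace.equiv (Fin r) ℝ).symm (fun j => ζs j q)

/-- The full inner mapping `Φ = (Ξ,Υ) : ℝ^n × ℝ^d → ℝ^{l+r}` of the minimax problem. -/
def mmPhi {n d l r : ℕ} (φs : Fin l → Euc n × Euc d → ℝ) (ζs : Fin r → Euc n × Euc d → ℝ)
    (q : Euc n × Euc d) : EuclideanSpace ℝ (Fin l ⊕ Fin r) :=
  (EuclideanSpace.equiv (Fin l ⊕ Fin r) ℝ).symm (Sum.elim (fun i => φs i q) (fun j => ζs j q))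

/-- The CPWL outer function of the constrained minimax problem:
`θ(z₁,z₂) = max_i (z₁)_i` if `⟨c_t, z₂⟩ ≤ τ_t` for all `t`, and `+∞` otherwise. -/
def mmTheta (l : ℕ) {r p : ℕ} (c : Fin p → Euc r) (τ : Fin p → ℝ) :
    EuclideanSpace ℝ (Fin l ⊕ Fin r) → EReal :=
  fun z => if ∀ t, (∑ j, c t j * z (Sum.inr j)) ≤ τ t
    then (((⨆ i : Fin l, z (Sum.inl i)) : ℝ) : EReal) else ⊤

/-!
For a convex piecewise linear `θ` the active index sets can only shrink near `z̄`. Hence `θ` is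
affine, with unchanged subdifferential, along the orthogonal complement of the span of the active
data at `z`, so the first component of a regular normal to `gph ∂θ` at `(z, v)` lies in that span;
as only finitely many shrinking spans occur, `∂²θ(z̄, v̄)(0) ⊆ S(z̄)`. Conversely `v̄` is a limit of
relative interior points `v` of `∂θ(z̄)`. Every graph point `(z', v')` near `(z̄, v)` has `v'`
maximizing `⟪·, z' - z̄⟫` over `∂θ(z̄)`, and `v'` is still a relative interior point, so
`z' - z̄` is orthogonal to `S(z̄)`; thus `S(z̄) × {0}` consists of regular normals at `(z̄, v)`.
This gives `∂²θ(z̄, v̄)(0) = S(z̄)`, which for the minimax function is the product of the two spans.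
-/

section RelativeInterior

/-! ### Relative interiors of convex sets -/

lemma mem_intrinsicInterior_iff_mem_nhdsWithin {𝕜 V P : Type*} [Ring 𝕜] [AddCommGroup V]
    [Module 𝕜 V] [TopologicalSpace P] [AddTorsor V P] {s : Set P} {x : P} :
    x ∈ intrinsicInterior 𝕜 s ↔ x ∈ affineSpan 𝕜 s ∧ s ∈ 𝓝[affineSpan 𝕜 s] x := by
  simp only [mem_intrinsicInterior, mem_interior_iff_mem_nhds]
  constructor
  · rintro ⟨y, hy, rfl⟩
    exact ⟨y.2, preimage_coe_mem_nhds_subtype.1 hy⟩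
  · rintro ⟨hx, hs⟩
    exact ⟨⟨x, hx⟩, preimage_coe_mem_nhds_subtype.2 hs, rfl⟩

lemma eventually_mem_intrinsicInterior {𝕜 V P : Type*} [Ring 𝕜] [AddCommGroup V]
    [Module 𝕜 V] [TopologicalSpace P] [AddTorsor V P] {s : Set P} {x : P}
    (hx : x ∈ intrinsicInterior 𝕜 s) : ∀ᶠ y in 𝓝[affineSpan 𝕜 s] x, y ∈ intrinsicInterior 𝕜 s := by
  simp only [mem_intrinsicInterior_iff_mem_nhdsWithin] at hx ⊢
  exact Filter.Eventually.and self_mem_nhdsWithin (eventually_eventually_nhdsWithin.2 hx.2)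

section TopologicalVectorSpace

variable {V : Type*} [AddCommGroup V] [Module ℝ V] [TopologicalSpace V] [IsTopologicalAddGroup V]
  [ContinuousSMul ℝ V] {C : Set V} {x y : V}

lemma homothety_mem_intrinsicInterior (hC : Convex ℝ C) (hx : x ∈ C)
    (hy : y ∈ intrinsicInterior ℝ C) {t : ℝ} (ht : t ∈ Ioc 0 1) :
    AffineMap.homothety x t y ∈ intrinsicInterior ℝ C := by
  obtain ⟨hyC, hy⟩ := mem_intrinsicInterior_iff_mem_nhdsWithin.1 hy
  have hxC := subset_affineSpan ℝ C hx
  have left_inverse : ∀ u, AffineMap.homothety x t⁻¹ (AffineMap.homothety x t u) = u := fun u => by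
    rw [← AffineMap.homothety_mul_apply, inv_mul_cancel₀ ht.1.ne', AffineMap.homothety_one,
      AffineMap.id_apply]
  have right_inverse : ∀ u, AffineMap.homothety x t (AffineMap.homothety x t⁻¹ u) = u := fun u => by
    rw [← AffineMap.homothety_mul_apply, mul_inv_cancel₀ ht.1.ne', AffineMap.homothety_one,
      AffineMap.id_apply]
  refine mem_intrinsicInterior_iff_mem_nhdsWithin.2 ⟨AffineMap.homothety_mem hxC t hyC, ?_⟩
  have tendsto_inverse : Tendsto (AffineMap.homothety x t⁻¹)
      (𝓝[affineSpan ℝ C] (AffineMap.homothety x t y)) (𝓝[affineSpan ℝ C] y) := by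
    have := (AffineMap.homothety_continuous x t⁻¹).continuousWithinAt.tendsto_nhdsWithin
      (s := affineSpan ℝ C) (x := AffineMap.homothety x t y)
      fun u hu => AffineMap.homothety_mem hxC t⁻¹ hu
    rwa [left_inverse] at this
  filter_upwards [tendsto_inverse hy] with u hu
  rw [← right_inverse u, AffineMap.homothety_eq_lineMap]
  exact hC.lineMap_mem hx hu (Ioc_subset_Icc_self ht)

lemma subset_closure_intrinsicInterior (hC : Convex ℝ C) (hne : (intrinsicInterior ℝ C).Nonempty) :
    C ⊆ closure (intrinsicInterior ℝ C) := by
  obtain ⟨y, hy⟩ := hne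
  intro x hx
  have homothety_tendsto : Tendsto (fun t : ℝ => AffineMap.homothety x t y) (𝓝[>] 0) (𝓝 x) := by
    have : Continuous fun t : ℝ => AffineMap.homothety x t y := by
      simp only [AffineMap.homothety_apply, vsub_eq_sub, vadd_eq_add]
      fun_prop
    simpa using (this.tendsto 0).mono_left nhdsWithin_le_nhds
  refine mem_closure_of_tendsto homothety_tendsto ?_
  filter_upwards [Ioc_mem_nhdsGT one_pos] with t ht
  exact homothety_mem_intrinsicInterior hC hx hy ht

end TopologicalVectorSpace

lemma eq_zero_of_eventually_mul_nonpos {a : ℝ} (h : ∀ᶠ t in 𝓝 (0 : ℝ), t * a ≤ 0) : a = 0 := by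
  have hmax : IsLocalMax (fun t : ℝ => t * a) 0 := by
    filter_upwards [h] with t ht
    rwa [zero_mul]
  simpa using hmax.deriv_eq_zero

lemma tendsto_add_smul_zero {V : Type*} [AddCommGroup V] [Module ℝ V] [TopologicalSpace V]
    [ContinuousAdd V] [ContinuousSMul ℝ V] (x h : V) :
    Tendsto (fun t : ℝ => x + t • h) (𝓝 0) (𝓝 x) := by
  simpa using (by fun_prop : Continuous fun t : ℝ => x + t • h).tendsto 0

lemma inner_eq_zero_of_isMaxOn {C : Set F} {v w h : F} (hv : v ∈ intrinsicInterior ℝ C)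
    (hmax : IsMaxOn (fun u => ⟪u, h⟫) C v) (hw : w ∈ (affineSpan ℝ C).direction) :
    ⟪w, h⟫ = 0 := by
  obtain ⟨hvC, hC⟩ := mem_intrinsicInterior_iff_mem_nhdsWithin.1 hv
  have line_tendsto : Tendsto (fun t : ℝ => v + t • w) (𝓝 0) (𝓝[affineSpan ℝ C] v) := by
    refine tendsto_nhdsWithin_iff.2 ⟨tendsto_add_smul_zero v w, .of_forall fun t => ?_⟩
    rw [add_comm]
    exact AffineSubspace.vadd_mem_of_mem_direction (Submodule.smul_mem _ t hw) hvC
  refine eq_zero_of_eventually_mul_nonpos ?_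
  filter_upwards [line_tendsto hC] with t ht
  have := isMaxOn_iff.1 hmax _ ht
  rwa [inner_add_left, real_inner_smul_left, add_le_iff_nonpos_right] at this

end RelativeInterior

section NormalCones

/-! ### Fréchet normals and graphs of subdifferentials -/

lemma inner_nonpos_of_mem_frechetNormal {Ω : Set F} {x v d : F} (hv : v ∈ frechetNormal Ω x)
    (hd : ∀ᶠ t in 𝓝[>] (0 : ℝ), x + t • d ∈ Ω) : ⟪v, d⟫ ≤ 0 := by
  rcases eq_or_ne d 0 with rfl | hd0
  · simp
  let quotient : F → ℝ := fun y => ⟪v, y - x⟫ / ‖y - x‖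
  let ray : ℝ → F := fun t => x + t • d
  have ray_tendsto : Tendsto ray (𝓝[>] 0) (𝓝[Ω] x) :=
    tendsto_nhdsWithin_iff.2 ⟨(tendsto_add_smul_zero x d).mono_left nhdsWithin_le_nhds, hd⟩
  have quotient_ray : quotient ∘ ray =ᶠ[𝓝[>] 0] fun _ => ⟪v, d⟫ / ‖d‖ := by
    filter_upwards [self_mem_nhdsWithin] with t (ht : 0 < t)
    simp only [quotient, ray, Function.comp_apply, add_sub_cancel_left, real_inner_smul_right,
      norm_smul, Real.norm_of_nonneg ht.le]
    exact mul_div_mul_left _ _ ht.ne'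
  have quotient_tendsto : Tendsto quotient (map ray (𝓝[>] 0)) (𝓝 (⟪v, d⟫ / ‖d‖)) :=
    tendsto_map'_iff.2 (tendsto_const_nhds.congr' quotient_ray.symm)
  have quotient_bounded : IsBoundedUnder (· ≤ ·) (𝓝[Ω] x) quotient :=
    isBoundedUnder_of ⟨‖v‖, fun y =>
      div_le_of_le_mul₀ (norm_nonneg _) (norm_nonneg _) (real_inner_le_norm _ _)⟩
  have : ⟪v, d⟫ / ‖d‖ ≤ 0 :=
    calc ⟪v, d⟫ / ‖d‖ = limsup quotient (map ray (𝓝[>] 0)) := quotient_tendsto.limsup_eq.symm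
      _ ≤ limsup quotient (𝓝[Ω] x) := limsup_le_limsup_of_le ray_tendsto
          quotient_tendsto.isCoboundedUnder_le quotient_bounded
      _ ≤ 0 := hv
  simpa using (div_le_iff₀ (norm_pos_iff.2 hd0)).1 this

lemma mem_frechetNormal_of_inner_eq_zero {Ω : Set F} {x v : F} (hx : x ∈ Ω)
    (h : ∀ᶠ y in 𝓝[Ω] x, ⟪v, y - x⟫ = 0) : v ∈ frechetNormal Ω x := by
  have : (𝓝[Ω] x).NeBot := mem_closure_iff_nhdsWithin_neBot.1 (subset_closure hx)
  have quotient_eq : (fun y => ⟪v, y - x⟫ / ‖y - x‖) =ᶠ[𝓝[Ω] x] fun _ => 0 := by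
    filter_upwards [h] with y hy
    rw [hy, zero_div]
  exact (limsup_congr quotient_eq).trans_le (limsup_const _).le

/-- The graph of `∂θ` in the `ℓ²`-product, the set whose limiting normals define `sosd θ`. -/
def subdiffGraph (θ : F → EReal) : Set (WithLp 2 (F × F)) :=
  {q | q.snd ∈ subdiff θ q.fst}

lemma inner_pl2_left (x : F) (y : G) (q : WithLp 2 (F × G)) :
    ⟪pl2 x y, q⟫ = ⟪x, q.fst⟫ + ⟪y, q.snd⟫ :=
  WithLp.prod_inner_apply _ _

end NormalCones

section PolyhedralFunctions

/-! ### Convex piecewise linear functions -/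

/-- Data of a convex piecewise linear function on `F`: affine pieces `⟪slope i, ·⟫ - offset i`,
whose maximum is taken over the polyhedron of the inequalities `⟪normal t, ·⟫ ≤ bound t`. -/
structure CPWLData (ι κ F : Type*) where
  slope : ι → F
  offset : ι → ℝ
  normal : κ → F
  bound : κ → ℝ

namespace CPWLData

variable {ι κ : Type*} (A : CPWLData ι κ F)

/-- The `i`-th affine piece. -/
def piece (i : ι) (z : F) : ℝ := ⟪A.slope i, z⟫ - A.offset i

/-- The finite part of the function, extended to all of `F`. -/
def maxPiece (z : F) : ℝ := ⨆ i, A.piece i z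

/-- The polyhedral effective domain. -/
def dom : Set F := {z | ∀ t, ⟪A.normal t, z⟫ ≤ A.bound t}

/-- The convex piecewise linear function itself, `+∞` outside `dom`. -/
def toFun (z : F) : EReal := if z ∈ A.dom then (A.maxPiece z : EReal) else ⊤

/-- The index set `𝒦(z)` of the pieces attaining the maximum. -/
def activePieces (z : F) : Set ι := {i | A.maxPiece z = A.piece i z}

/-- The index set `ℐ(z)` of the binding inequalities. -/
def activeConstraints (z : F) : Set κ := {t | ⟪A.normal t, z⟫ = A.bound t}

/-- The span of the differences of active slopes and of the active constraint normals; the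
function is affine near `z` along its orthogonal complement. -/
def activeSpan (z : F) : Submodule ℝ F :=
  .span ℝ (image2 (fun i j => A.slope i - A.slope j) (A.activePieces z) (A.activePieces z)) ⊔
    .span ℝ (A.normal '' A.activeConstraints z)

lemma continuous_piece (i : ι) : Continuous (A.piece i) := by
  unfold piece
  fun_prop

lemma piece_add_smul (i : ι) (z h : F) (s : ℝ) :
    A.piece i (z + s • h) = A.piece i z + s * ⟪A.slope i, h⟫ := by
  rw [piece, piece, inner_add_right, real_inner_smul_right]
  ring

lemma piece_le_maxPiece [Finite ι] (i : ι) (z : F) : A.piece i z ≤ A.maxPiece z :=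
  le_ciSup (finite_range fun i => A.piece i z).bddAbove i

variable {A} in
lemma mem_orthogonal_activeSpan {z h : F} :
    h ∈ (A.activeSpan z)ᗮ ↔
      (∀ i ∈ A.activePieces z, ∀ j ∈ A.activePieces z, ⟪A.slope i, h⟫ = ⟪A.slope j, h⟫) ∧
        ∀ t ∈ A.activeConstraints z, ⟪A.normal t, h⟫ = 0 := by
  have mem_orthogonal_span (s : Set F) : h ∈ (Submodule.span ℝ s)ᗮ ↔ ∀ u ∈ s, ⟪u, h⟫ = 0 := by
    rw [← Submodule.span_singleton_le_iff_mem, ← Submodule.isOrtho_iff_le, Submodule.isOrtho_comm,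
      Submodule.isOrtho_span]
    simp only [mem_singleton_iff, forall_eq]
  simp only [activeSpan, ← Submodule.inf_orthogonal, Submodule.mem_inf, mem_orthogonal_span,
    forall_mem_image2, forall_mem_image, inner_sub_left, sub_eq_zero]

lemma eventually_activeConstraints_subset [Finite κ] (z₀ : F) :
    ∀ᶠ z in 𝓝 z₀, A.activeConstraints z ⊆ A.activeConstraints z₀ := by
  refine eventually_all.2 fun t => ?_
  by_cases ht : t ∈ A.activeConstraints z₀
  · exact .of_forall fun _ _ => ht
  · have inner_continuous : Continuous fun z => ⟪A.normal t, z⟫ := by fun_prop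
    filter_upwards [inner_continuous.continuousAt.eventually_ne ht] with z hz using
      fun hmem => absurd hmem hz

section FinitelyManyPieces

variable [Finite ι] [Nonempty ι]

lemma activePieces_nonempty (z : F) : (A.activePieces z).Nonempty :=
  let ⟨i, hi⟩ := exists_eq_ciSup_of_finite (ι := ι) (f := fun i => A.piece i z)
  ⟨i, hi.symm⟩

lemma eventually_activePieces_subset (z₀ : F) :
    ∀ᶠ z in 𝓝 z₀, A.activePieces z ⊆ A.activePieces z₀ := by
  refine eventually_all.2 fun i => ?_
  by_cases hi : i ∈ A.activePieces z₀
  · exact .of_forall fun _ _ => hi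
  · obtain ⟨j, hj⟩ := A.activePieces_nonempty z₀
    have piece_lt : A.piece i z₀ < A.piece j z₀ :=
      (lt_of_le_of_ne (A.piece_le_maxPiece i z₀) (Ne.symm hi)).trans_eq hj
    filter_upwards [(A.continuous_piece i).continuousAt.eventually_lt
      (A.continuous_piece j).continuousAt piece_lt] with z hz hmem
    exact absurd (hz.trans_le (A.piece_le_maxPiece j z)) (hmem.symm ▸ lt_irrefl _)

variable [Finite κ]

lemma eventually_activeSpan_le (z₀ : F) : ∀ᶠ z in 𝓝 z₀, A.activeSpan z ≤ A.activeSpan z₀ := by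
  filter_upwards [A.eventually_activePieces_subset z₀, A.eventually_activeConstraints_subset z₀]
    with z hpieces hconstraints
  exact sup_le_sup (Submodule.span_mono (image2_subset hpieces hpieces))
    (Submodule.span_mono (image_mono hconstraints))

lemma eventually_maxPiece_eq_and_sub_mem_orthogonal (z₀ : F) :
    ∀ᶠ z in 𝓝 z₀, z - z₀ ∈ (A.activeSpan z)ᗮ ∧
      ∀ i ∈ A.activePieces z, A.maxPiece z = A.maxPiece z₀ + ⟪A.slope i, z - z₀⟫ := by
  filter_upwards [A.eventually_activePieces_subset z₀, A.eventually_activeConstraints_subset z₀]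
    with z hpieces hconstraints
  have maxPiece_eq : ∀ i ∈ A.activePieces z,
      A.maxPiece z = A.maxPiece z₀ + ⟪A.slope i, z - z₀⟫ := fun i hi => by
    rw [(hi : A.maxPiece z = A.piece i z), (hpieces hi : A.maxPiece z₀ = A.piece i z₀), piece,
      piece, inner_sub_right]
    ring
  refine ⟨mem_orthogonal_activeSpan.2 ⟨fun i hi j hj => ?_, fun t ht => ?_⟩, maxPiece_eq⟩
  · linarith [maxPiece_eq i hi, maxPiece_eq j hj]
  · rw [inner_sub_right, (ht : ⟪A.normal t, z⟫ = A.bound t),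
      (hconstraints ht : ⟪A.normal t, z₀⟫ = A.bound t), sub_self]

end FinitelyManyPieces

variable {A} {i : ι} {t : κ} {z z₀ v h : F}

lemma eventually_add_smul_mem_dom [Finite κ] (hz : z ∈ A.dom) (hh : h ∈ (A.activeSpan z)ᗮ) :
    ∀ᶠ s : ℝ in 𝓝 0, z + s • h ∈ A.dom := by
  refine eventually_all.2 fun t => ?_
  have inner_line (s : ℝ) : ⟪A.normal t, z + s • h⟫ = ⟪A.normal t, z⟫ + s * ⟪A.normal t, h⟫ := by
    rw [inner_add_right, real_inner_smul_right]
  by_cases ht : t ∈ A.activeConstraints z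
  · refine .of_forall fun s => ?_
    rw [inner_line, (mem_orthogonal_activeSpan.1 hh).2 t ht, mul_zero, add_zero]
    exact hz t
  · have inner_continuous : Continuous fun z => ⟪A.normal t, z⟫ := by fun_prop
    filter_upwards [(inner_continuous.tendsto z).comp (tendsto_add_smul_zero z h)
      |>.eventually_le_const (lt_of_le_of_ne (hz t) ht)] with s hs using hs

section FinitelyManyPieces

variable [Finite ι] [Nonempty ι]

lemma eventually_maxPiece_add_smul (hi : i ∈ A.activePieces z) (hh : h ∈ (A.activeSpan z)ᗮ) :
    ∀ᶠ s : ℝ in 𝓝 0, A.maxPiece (z + s • h) = A.maxPiece z + s * ⟪A.slope i, h⟫ := by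
  filter_upwards [(tendsto_add_smul_zero z h).eventually (A.eventually_activePieces_subset z)]
    with s hs
  obtain ⟨j, hj⟩ := A.activePieces_nonempty (z + s • h)
  calc A.maxPiece (z + s • h) = A.piece j z + s * ⟪A.slope j, h⟫ := by
        rw [(hj : A.maxPiece (z + s • h) = A.piece j _), A.piece_add_smul]
    _ = A.maxPiece z + s * ⟪A.slope i, h⟫ := by
        rw [← (hs hj : A.maxPiece z = A.piece j z),
          (mem_orthogonal_activeSpan.1 hh).1 j (hs hj) i hi]

end FinitelyManyPieces

/-! ### Subdifferentials of convex piecewise linear functions -/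

lemma mem_subdiff_iff (hz : z ∈ A.dom) :
    v ∈ subdiff A.toFun z ↔ ∀ z' ∈ A.dom, A.maxPiece z + ⟪v, z' - z⟫ ≤ A.maxPiece z' := by
  refine forall_congr' fun z' => ?_
  by_cases hz' : z' ∈ A.dom
  · simp only [toFun, hz, hz', if_true, true_imp_iff]
    exact_mod_cast Iff.rfl
  · simp [toFun, hz']

lemma mem_dom_of_mem_subdiff (hdom : A.dom.Nonempty) (hv : v ∈ subdiff A.toFun z) : z ∈ A.dom := by
  obtain ⟨z', hz'⟩ := hdom
  by_contra hz
  have := hv z'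
  simp [toFun, hz, hz'] at this

lemma convex_subdiff (hz : z ∈ A.dom) : Convex ℝ (subdiff A.toFun z) := by
  have subdiff_eq : subdiff A.toFun z =
      ⋂ z' ∈ A.dom, {v | ⟪v, z' - z⟫ ≤ A.maxPiece z' - A.maxPiece z} := by
    ext v
    simp only [mem_subdiff_iff hz, mem_iInter₂, mem_ofPred_eq, le_sub_iff_add_le']
  rw [subdiff_eq]
  refine convex_iInter₂ fun z' _ => convex_halfSpace_le ?_ _
  exact { map_add := fun _ _ => inner_add_left _ _ _
          map_smul := fun _ _ => real_inner_smul_left _ _ _ }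

section FinitelyManyPieces

variable [Finite ι]

lemma slope_mem_subdiff (hz : z ∈ A.dom) (hi : i ∈ A.activePieces z) :
    A.slope i ∈ subdiff A.toFun z := by
  refine (mem_subdiff_iff hz).2 fun z' _ => ?_
  calc A.maxPiece z + ⟪A.slope i, z' - z⟫ = A.piece i z' := by
        rw [(hi : A.maxPiece z = A.piece i z), piece, piece, inner_sub_right]
        ring
    _ ≤ A.maxPiece z' := A.piece_le_maxPiece i z'

lemma slope_add_normal_mem_subdiff (hz : z ∈ A.dom) (hi : i ∈ A.activePieces z)
    (ht : t ∈ A.activeConstraints z) : A.slope i + A.normal t ∈ subdiff A.toFun z := by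
  refine (mem_subdiff_iff hz).2 fun z' hz' => ?_
  have slope_le := (mem_subdiff_iff hz).1 (slope_mem_subdiff hz hi) z' hz'
  have normal_le : ⟪A.normal t, z' - z⟫ ≤ 0 := by
    rw [inner_sub_right, (ht : ⟪A.normal t, z⟫ = A.bound t), sub_nonpos]
    exact hz' t
  rw [inner_add_left]
  linarith

variable [Nonempty ι] [Finite κ]

instance (z : F) : FiniteDimensional ℝ (A.activeSpan z) := by
  have := FiniteDimensional.span_of_finite ℝ ((toFinite (A.activePieces z)).image2
    (fun i j => A.slope i - A.slope j) (toFinite (A.activePieces z)))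
  have := FiniteDimensional.span_of_finite ℝ ((toFinite (A.activeConstraints z)).image A.normal)
  exact Submodule.finiteDimensional_sup _ _

lemma inner_eq_inner_slope (hz : z ∈ A.dom) (hv : v ∈ subdiff A.toFun z)
    (hi : i ∈ A.activePieces z) (hh : h ∈ (A.activeSpan z)ᗮ) : ⟪v, h⟫ = ⟪A.slope i, h⟫ := by
  refine sub_eq_zero.1 (eq_zero_of_eventually_mul_nonpos ?_)
  filter_upwards [eventually_add_smul_mem_dom hz hh, eventually_maxPiece_add_smul hi hh]
    with s hs hmax
  have := (mem_subdiff_iff hz).1 hv _ hs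
  rw [add_sub_cancel_left, real_inner_smul_right, hmax] at this
  linarith

lemma sub_mem_activeSpan {u : F} (hz : z ∈ A.dom) (hu : u ∈ subdiff A.toFun z)
    (hv : v ∈ subdiff A.toFun z) : u - v ∈ A.activeSpan z := by
  obtain ⟨i, hi⟩ := A.activePieces_nonempty z
  rw [← (A.activeSpan z).orthogonal_orthogonal, Submodule.mem_orthogonal']
  intro h hh
  rw [inner_sub_left, inner_eq_inner_slope hz hu hi hh, inner_eq_inner_slope hz hv hi hh, sub_self]

lemma eventually_mem_subdiff_add_smul (hz : z ∈ A.dom) (hv : v ∈ subdiff A.toFun z)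
    (hh : h ∈ (A.activeSpan z)ᗮ) : ∀ᶠ s : ℝ in 𝓝 0, v ∈ subdiff A.toFun (z + s • h) := by
  obtain ⟨i, hi⟩ := A.activePieces_nonempty z
  filter_upwards [eventually_add_smul_mem_dom hz hh, eventually_maxPiece_add_smul hi hh]
    with s hs hmax
  refine (mem_subdiff_iff hs).2 fun z' hz' => ?_
  calc A.maxPiece (z + s • h) + ⟪v, z' - (z + s • h)⟫ = A.maxPiece z + ⟪v, z' - z⟫ := by
        rw [hmax, ← inner_eq_inner_slope hz hv hi hh, ← sub_sub, inner_sub_right v (z' - z),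
          real_inner_smul_right]
        ring
    _ ≤ A.maxPiece z' := (mem_subdiff_iff hz).1 hv z' hz'

theorem spar_eq_activeSpan (hz : z ∈ A.dom) : Spar A.toFun z = A.activeSpan z := by
  obtain ⟨i₀, hi₀⟩ := A.activePieces_nonempty z
  rw [Spar, direction_affineSpan]
  refine le_antisymm (Submodule.span_le.2 ?_) (sup_le (Submodule.span_le.2 ?_)
    (Submodule.span_le.2 ?_))
  · rintro _ ⟨u, hu, v, hv, rfl⟩
    exact sub_mem_activeSpan hz hu hv
  · rintro _ ⟨i, hi, j, hj, rfl⟩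
    exact vsub_mem_vectorSpan ℝ (slope_mem_subdiff hz hi) (slope_mem_subdiff hz hj)
  · rintro _ ⟨t, ht, rfl⟩
    simpa using vsub_mem_vectorSpan ℝ (slope_add_normal_mem_subdiff hz hi₀ ht)
      (slope_mem_subdiff hz hi₀)

/-! ### The second-order subdifferential in direction zero -/

lemma fst_mem_activeSpan {q w : WithLp 2 (F × F)} (hdom : A.dom.Nonempty)
    (hq : q ∈ subdiffGraph A.toFun) (hw : w ∈ frechetNormal (subdiffGraph A.toFun) q) :
    w.fst ∈ A.activeSpan q.fst := by
  have inner_nonpos {h : F} (hh : h ∈ (A.activeSpan q.fst)ᗮ) : ⟪w.fst, h⟫ ≤ 0 := by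
    have h_graph : ∀ᶠ s in 𝓝[>] (0 : ℝ), q + s • pl2 h 0 ∈ subdiffGraph A.toFun := by
      filter_upwards [(eventually_mem_subdiff_add_smul (mem_dom_of_mem_subdiff hdom hq) hq
        hh).filter_mono nhdsWithin_le_nhds] with s hs
      simpa [subdiffGraph, pl2] using hs
    have := inner_nonpos_of_mem_frechetNormal hw h_graph
    rwa [real_inner_comm, inner_pl2_left, inner_zero_left, add_zero, real_inner_comm] at this
  rw [← (A.activeSpan q.fst).orthogonal_orthogonal, Submodule.mem_orthogonal']
  refine fun h hh => le_antisymm (inner_nonpos hh) ?_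
  simpa using inner_nonpos (neg_mem hh)

lemma sosd_zero_subset_activeSpan (hz₀ : z₀ ∈ A.dom) :
    sosd A.toFun z₀ v 0 ⊆ A.activeSpan z₀ := by
  rintro w ⟨qs, ws, hqs, hq, hw, hnormal⟩
  have fst_tendsto : Tendsto (fun k => (ws k).fst) atTop (𝓝 w) :=
    ((WithLp.continuous_fst 2 F F).tendsto _).comp hw
  have point_tendsto : Tendsto (fun k => (qs k).fst) atTop (𝓝 z₀) :=
    ((WithLp.continuous_fst 2 F F).tendsto _).comp hq
  refine (A.activeSpan z₀).closed_of_finiteDimensional.mem_of_tendsto fst_tendsto ?_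
  filter_upwards [point_tendsto.eventually (A.eventually_activeSpan_le z₀)] with k hk
  exact hk (fst_mem_activeSpan ⟨z₀, hz₀⟩ (hqs k) (hnormal k))

lemma eventually_mem_subdiff_and_isMaxOn (hz₀ : z₀ ∈ A.dom) :
    ∀ᶠ z in 𝓝 z₀, ∀ v ∈ subdiff A.toFun z, v ∈ subdiff A.toFun z₀ ∧
      IsMaxOn (fun u => ⟪u, z - z₀⟫) (subdiff A.toFun z₀) v := by
  filter_upwards [A.eventually_maxPiece_eq_and_sub_mem_orthogonal z₀]
    with z ⟨h_orth, maxPiece_eq⟩ v hv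
  obtain ⟨i, hi⟩ := A.activePieces_nonempty z
  have hz := mem_dom_of_mem_subdiff ⟨z₀, hz₀⟩ hv
  have maxPiece_eq : A.maxPiece z = A.maxPiece z₀ + ⟪v, z - z₀⟫ := by
    rw [inner_eq_inner_slope hz hv hi h_orth, maxPiece_eq i hi]
  refine ⟨(mem_subdiff_iff hz₀).2 fun z' hz' => ?_, isMaxOn_iff.2 fun u hu => ?_⟩
  · have := (mem_subdiff_iff hz).1 hv z' hz'
    rwa [maxPiece_eq, add_assoc, ← inner_add_right, sub_add_sub_cancel'] at this
  · have := (mem_subdiff_iff hz₀).1 hu z hz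
    linarith

lemma pl2_mem_frechetNormal {w : F} (hz₀ : z₀ ∈ A.dom)
    (hv : v ∈ intrinsicInterior ℝ (subdiff A.toFun z₀)) (hw : w ∈ Spar A.toFun z₀) :
    pl2 w 0 ∈ frechetNormal (subdiffGraph A.toFun) (pl2 z₀ v) := by
  have hv_mem : v ∈ subdiff A.toFun z₀ := intrinsicInterior_subset hv
  refine mem_frechetNormal_of_inner_eq_zero hv_mem (eventually_nhdsWithin_iff.2 ?_)
  have near_fst : ∀ᶠ q in 𝓝 (pl2 z₀ v), _ :=
    ((WithLp.continuous_fst 2 F F).tendsto _).eventually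
      (eventually_mem_subdiff_and_isMaxOn hz₀)
  have near_snd : ∀ᶠ q in 𝓝 (pl2 z₀ v), _ :=
    ((WithLp.continuous_snd 2 F F).tendsto _).eventually
      (eventually_nhdsWithin_iff.1 (eventually_mem_intrinsicInterior hv))
  filter_upwards [near_fst, near_snd] with q h_max h_interior hq
  obtain ⟨h_mem, h_max⟩ := h_max _ hq
  rw [inner_pl2_left, inner_zero_left, add_zero]
  exact inner_eq_zero_of_isMaxOn (h_interior (subset_affineSpan ℝ _ h_mem)) h_max hw

theorem sosd_zero_eq_spar [FiniteDimensional ℝ F] (hz₀ : z₀ ∈ A.dom)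
    (hv : v ∈ subdiff A.toFun z₀) : sosd A.toFun z₀ v 0 = Spar A.toFun z₀ := by
  refine Subset.antisymm ?_ fun w hw => ?_
  · rw [spar_eq_activeSpan hz₀]
    exact sosd_zero_subset_activeSpan hz₀
  have hconv := convex_subdiff hz₀
  obtain ⟨vs, h_interior, vs_tendsto⟩ := mem_closure_iff_seq_limit.1
    (subset_closure_intrinsicInterior hconv (Set.Nonempty.intrinsicInterior hconv ⟨v, hv⟩) hv)
  have vs_mem (k : ℕ) : vs k ∈ subdiff A.toFun z₀ := intrinsicInterior_subset (h_interior k)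
  refine ⟨fun k => pl2 z₀ (vs k), fun _ => pl2 w (-0), vs_mem, ?_, tendsto_const_nhds,
    fun k => ?_⟩
  · exact ((WithLp.prod_continuous_toLp 2 F F).tendsto _).comp
      (tendsto_const_nhds.prodMk_nhds vs_tendsto)
  · rw [neg_zero]
    exact pl2_mem_frechetNormal hz₀ (h_interior k) hw

end FinitelyManyPieces

end CPWLData

end PolyhedralFunctions

section Minimax

/-! ### The constrained minimax problem -/

section EuclideanSum

variable {ι κ : Type*} [Fintype ι] [Fintype κ]

lemma inner_sumEquivProd_symm (y₁ : EuclideanSpace ℝ ι) (y₂ : EuclideanSpace ℝ κ)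
    (z : EuclideanSpace ℝ (ι ⊕ κ)) :
    ⟪EuclideanSpace.sumEquivProd.symm (y₁, y₂), z⟫ =
      ⟪y₁, (EuclideanSpace.sumEquivProd z).1⟫ + ⟪y₂, (EuclideanSpace.sumEquivProd z).2⟫ := by
  simp only [PiLp.inner_apply, Fintype.sum_sum_type]
  rfl

lemma adjoint_fderiv_sumEquivProd_symm {E : Type*} [NormedAddCommGroup E] [InnerProductSpace ℝ E]
    [CompleteSpace E] {f : E → EuclideanSpace ℝ ι} {g : E → EuclideanSpace ℝ κ} {x : E}
    (hf : DifferentiableAt ℝ f x) (hg : DifferentiableAt ℝ g x) (y₁ : EuclideanSpace ℝ ι)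
    (y₂ : EuclideanSpace ℝ κ) :
    ContinuousLinearMap.adjoint (fderiv ℝ (fun x => EuclideanSpace.sumEquivProd.symm (f x, g x)) x)
        (EuclideanSpace.sumEquivProd.symm (y₁, y₂)) =
      ContinuousLinearMap.adjoint (fderiv ℝ f x) y₁ +
        ContinuousLinearMap.adjoint (fderiv ℝ g x) y₂ := by
  have hasFDerivAt : HasFDerivAt (fun x => EuclideanSpace.sumEquivProd.symm (f x, g x)) _ x :=
    (EuclideanSpace.sumEquivProd (𝕜 := ℝ) (ι := ι) (κ := κ)).symm.hasFDerivAt.comp x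
      (hf.hasFDerivAt.prodMk hg.hasFDerivAt)
  refine ext_inner_right ℝ fun u => ?_
  rw [ContinuousLinearMap.adjoint_inner_left, inner_sumEquivProd_symm, inner_add_left,
    ContinuousLinearMap.adjoint_inner_left, ContinuousLinearMap.adjoint_inner_left,
    hasFDerivAt.fderiv]
  rfl

end EuclideanSum

lemma map_prod_inter_zeros_eq_singleton_zero_iff {R M N V W : Type*} [Semiring R]
    [AddCommMonoid M] [AddCommMonoid N] [AddCommMonoid V] [Module R M] [Module R N] [Module R V]
    [Zero W] (e : (M × N) ≃ₗ[R] V) (S : Submodule R M) (T : Submodule R N) {B : V → W}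
    (hB : B 0 = 0) :
    ((S.prod T).map e.toLinearMap : Set V) ∩ {y | B y = 0} = {0} ↔
      ∀ y₁ y₂, y₁ ∈ S → y₂ ∈ T → B (e (y₁, y₂)) = 0 → y₁ = 0 ∧ y₂ = 0 := by
  calc ((S.prod T).map e.toLinearMap : Set V) ∩ {y | B y = 0} = {0}
    _ ↔ ∀ y, (e.symm y).1 ∈ S → (e.symm y).2 ∈ T → B y = 0 → y = 0 := by
      simp [eq_singleton_iff_unique_mem, Submodule.map_equiv_eq_comap_symm, hB]
    _ ↔ ∀ y₁ y₂, y₁ ∈ S → y₂ ∈ T → B (e (y₁, y₂)) = 0 → y₁ = 0 ∧ y₂ = 0 := by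
      simp only [e.surjective.forall, Prod.forall, e.symm_apply_apply, e.map_eq_zero_iff,
        Prod.mk_eq_zero]

/-- The span of `eᵢ - eⱼ` over the maximizing coordinates `i, j` of `z₁`, the first factor of the
paper's subspace `𝒟`. -/
def maxCoordSpan {l : ℕ} (z₁ : Euc l) : Submodule ℝ (Euc l) :=
  .span ℝ (image2 (fun i j => EuclideanSpace.single i 1 - EuclideanSpace.single j 1)
    {i | (⨆ i', z₁ i') = z₁ i} {i | (⨆ i', z₁ i') = z₁ i})

/-- The span of the normals `cₜ` binding at `z₂`, the second factor of the paper's `𝒟`. -/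
def bindingNormalSpan {r p : ℕ} (c : Fin p → Euc r) (τ : Fin p → ℝ) (z₂ : Euc r) :
    Submodule ℝ (Euc r) :=
  .span ℝ (c '' {t | ⟪c t, z₂⟫ = τ t})

/-- The outer function of the minimax problem as convex piecewise linear data, with slopes
`(eᵢ, 0)` and constraint normals `(0, cₜ)`. -/
def minimaxData (l : ℕ) {r p : ℕ} (c : Fin p → Euc r) (τ : Fin p → ℝ) :
    CPWLData (Fin l) (Fin p) (EuclideanSpace ℝ (Fin l ⊕ Fin r)) where
  slope i := EuclideanSpace.sumEquivProd.symm (EuclideanSpace.single i 1, 0)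
  offset _ := 0
  normal t := EuclideanSpace.sumEquivProd.symm (0, c t)
  bound := τ

namespace minimaxData

variable {l r p : ℕ} (c : Fin p → Euc r) (τ : Fin p → ℝ) (z : EuclideanSpace ℝ (Fin l ⊕ Fin r))

lemma piece_eq (i : Fin l) :
    (minimaxData l c τ).piece i z = (EuclideanSpace.sumEquivProd z).1 i := by
  rw [CPWLData.piece, minimaxData, inner_sumEquivProd_symm, inner_zero_left,
    EuclideanSpace.inner_single_left, map_one, one_mul, add_zero, sub_zero]

lemma inner_normal (t : Fin p) :
    ⟪(minimaxData l c τ).normal t, z⟫ = ⟪c t, (EuclideanSpace.sumEquivProd z).2⟫ := by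
  rw [minimaxData, inner_sumEquivProd_symm, inner_zero_left, zero_add]

lemma toFun_eq_mmTheta : (minimaxData l c τ).toFun = mmTheta l c τ := by
  ext z
  have inner_eq_sum (t : Fin p) :
      ⟪c t, (EuclideanSpace.sumEquivProd z).2⟫ = ∑ j, c t j * z (Sum.inr j) := by
    simp [PiLp.inner_apply, mul_comm]
  simp only [CPWLData.toFun, CPWLData.dom, CPWLData.maxPiece, mem_ofPred_eq, inner_normal, piece_eq,
    inner_eq_sum]
  rfl

lemma activePieces_eq (z₁ : Euc l) (z₂ : Euc r) :
    (minimaxData l c τ).activePieces (EuclideanSpace.sumEquivProd.symm (z₁, z₂)) =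
      {i | (⨆ i', z₁ i') = z₁ i} := by
  simp only [CPWLData.activePieces, CPWLData.maxPiece, piece_eq,
    ContinuousLinearEquiv.apply_symm_apply]

lemma activeConstraints_eq (z₁ : Euc l) (z₂ : Euc r) :
    (minimaxData l c τ).activeConstraints (EuclideanSpace.sumEquivProd.symm (z₁, z₂)) =
      {t | ⟪c t, z₂⟫ = τ t} := by
  simp only [CPWLData.activeConstraints, inner_normal, ContinuousLinearEquiv.apply_symm_apply]
  rfl

lemma activeSpan_eq (z₁ : Euc l) (z₂ : Euc r) :
    (minimaxData l c τ).activeSpan (EuclideanSpace.sumEquivProd.symm (z₁, z₂)) =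
      ((maxCoordSpan z₁).prod (bindingNormalSpan c τ z₂)).map
        EuclideanSpace.sumEquivProd.symm.toLinearEquiv.toLinearMap := by
  have slope_sub (i j : Fin l) : (minimaxData l c τ).slope i - (minimaxData l c τ).slope j =
      EuclideanSpace.sumEquivProd.symm
        (EuclideanSpace.single i (1 : ℝ) - EuclideanSpace.single j (1 : ℝ), 0) := by
    rw [minimaxData, ← map_sub, Prod.mk_sub_mk, sub_zero]
  rw [LinearMap.prod_eq_sup_map, Submodule.map_sup, maxCoordSpan, bindingNormalSpan,
    CPWLData.activeSpan, activePieces_eq, activeConstraints_eq]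
  simp only [Submodule.map_span, image_image2, image_image, slope_sub]
  rfl

end minimaxData

theorem minimax_nondegeneracy_iff_general {E : Type*} [NormedAddCommGroup E]
    [InnerProductSpace ℝ E] [CompleteSpace E] {l r p : ℕ} (hl : 0 < l) {Ξ : E → Euc l}
    {Υ : E → Euc r} (c : Fin p → Euc r) (τ : Fin p → ℝ) {xb : E} (hΞ : DifferentiableAt ℝ Ξ xb)
    (hΥ : DifferentiableAt ℝ Υ xb) (hfeas : ∀ t, ⟪c t, Υ xb⟫ ≤ τ t)
    {vb : EuclideanSpace ℝ (Fin l ⊕ Fin r)}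
    (hvb : vb ∈ subdiff (mmTheta l c τ) (EuclideanSpace.sumEquivProd.symm (Ξ xb, Υ xb))) :
    List.TFAE [
      sosd (mmTheta l c τ) (EuclideanSpace.sumEquivProd.symm (Ξ xb, Υ xb)) vb 0 ∩
        {y | ContinuousLinearMap.adjoint
          (fderiv ℝ (fun x => EuclideanSpace.sumEquivProd.symm (Ξ x, Υ x)) xb) y = 0} = {0},
      (Spar (mmTheta l c τ) (EuclideanSpace.sumEquivProd.symm (Ξ xb, Υ xb)) : Set _) ∩
        {y | ContinuousLinearMap.adjoint
          (fderiv ℝ (fun x => EuclideanSpace.sumEquivProd.symm (Ξ x, Υ x)) xb) y = 0} = {0},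
      ∀ y₁ y₂, y₁ ∈ maxCoordSpan (Ξ xb) → y₂ ∈ bindingNormalSpan c τ (Υ xb) →
        ContinuousLinearMap.adjoint (fderiv ℝ Ξ xb) y₁ +
          ContinuousLinearMap.adjoint (fderiv ℝ Υ xb) y₂ = 0 → y₁ = 0 ∧ y₂ = 0] := by
  have : Nonempty (Fin l) := Fin.pos_iff_nonempty.1 hl
  have hdom : EuclideanSpace.sumEquivProd.symm (Ξ xb, Υ xb) ∈ (minimaxData l c τ).dom := fun t => by
    rw [minimaxData.inner_normal, ContinuousLinearEquiv.apply_symm_apply]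
    exact hfeas t
  rw [← minimaxData.toFun_eq_mmTheta] at hvb ⊢
  tfae_have 1 ↔ 2 := by
    rw [CPWLData.sosd_zero_eq_spar hdom hvb]
  tfae_have 2 ↔ 3 := by
    rw [CPWLData.spar_eq_activeSpan hdom, minimaxData.activeSpan_eq,
      map_prod_inter_zeros_eq_singleton_zero_iff _ _ _ (map_zero _)]
    simp only [ContinuousLinearEquiv.coe_toLinearEquiv, adjoint_fderiv_sumEquivProd_symm hΞ hΥ]
  tfae_finish

lemma differentiableAt_euclideanSpace_equiv_symm_prodMk_left {ι E E' : Type*} [Finite ι]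
    [NormedAddCommGroup E] [NormedSpace ℝ E] [NormedAddCommGroup E'] [NormedSpace ℝ E']
    {ψ : ι → E × E' → ℝ} {x : E} {w : E'} (hψ : ∀ i, DifferentiableAt ℝ (ψ i) (x, w)) :
    DifferentiableAt ℝ (fun x => (EuclideanSpace.equiv ι ℝ).symm fun i => ψ i (x, w)) x := by
  have := Fintype.ofFinite ι
  exact differentiableAt_euclidean.2 fun i =>
    (hψ i).comp x (differentiableAt_id.prodMk (differentiableAt_const w))

end Minimax

/-- Equivalent form of the nondegeneracy condition for constrained
minimax problems: `∂²θ(zb,vb)(0) ∩ ker ∇ₓΦ(xb,wb)* = {0}` (equivalently,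
`S(zb) ∩ ker ∇ₓΦ(xb,wb)* = {0}`) holds iff the only pair `(y₁,y₂)` with
`y₁ ∈ span{e_i - e_j : i,j ∈ 𝒦(zb₁)}`, `y₂ ∈ span{c_t : t ∈ ℐ(zb₂)}` and
`∇ₓΞ(xb,wb)* y₁ + ∇ₓΥ(xb,wb)* y₂ = 0` is `(0,0)`. -/
theorem minimax_nondegeneracy_iff {n dd l r p : ℕ} (hl : 0 < l)
    (φs : Fin l → Euc n × Euc dd → ℝ) (ζs : Fin r → Euc n × Euc dd → ℝ)
    (c : Fin p → Euc r) (τ : Fin p → ℝ) (xb : Euc n) (wb : Euc dd)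
    (hφs : ∀ i, ContDiffAt ℝ 2 (φs i) (xb, wb)) (hζs : ∀ j, ContDiffAt ℝ 2 (ζs j) (xb, wb))
    (hfeas : ∀ t, ⟪c t, mmUps ζs (xb, wb)⟫ ≤ τ t)
    (vb : EuclideanSpace ℝ (Fin l ⊕ Fin r))
    (hvb : vb ∈ subdiff (mmTheta l c τ) (mmPhi φs ζs (xb, wb))) :
    ((sosd (mmTheta l c τ) (mmPhi φs ζs (xb, wb)) vb 0 ∩
        {y | ContinuousLinearMap.adjoint (fderiv ℝ (fun x => mmPhi φs ζs (x, wb)) xb) y = 0} =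
          {0} ↔
      ∀ (y₁ : Euc l) (y₂ : Euc r),
        y₁ ∈ Submodule.span ℝ (Set.image2
            (fun i j => (EuclideanSpace.single i (1:ℝ) : Euc l) - EuclideanSpace.single j (1:ℝ))
            {i | (⨆ i', φs i' (xb, wb)) = φs i (xb, wb)}
            {i | (⨆ i', φs i' (xb, wb)) = φs i (xb, wb)}) →
        y₂ ∈ Submodule.span ℝ (c '' {t | ⟪c t, mmUps ζs (xb, wb)⟫ = τ t}) →
        ContinuousLinearMap.adjoint (fderiv ℝ (fun x => mmXi φs (x, wb)) xb) y₁ +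
          ContinuousLinearMap.adjoint (fderiv ℝ (fun x => mmUps ζs (x, wb)) xb) y₂ = 0 →
        y₁ = 0 ∧ y₂ = 0) ∧
     ((Spar (mmTheta l c τ) (mmPhi φs ζs (xb, wb)) : Set (EuclideanSpace ℝ (Fin l ⊕ Fin r))) ∩
        {y | ContinuousLinearMap.adjoint (fderiv ℝ (fun x => mmPhi φs ζs (x, wb)) xb) y = 0} =
          {0} ↔
      ∀ (y₁ : Euc l) (y₂ : Euc r),
        y₁ ∈ Submodule.span ℝ (Set.image2
            (fun i j => (EuclideanSpace.single i (1:ℝ) : Euc l) - EuclideanSpace.single j (1:ℝ))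
            {i | (⨆ i', φs i' (xb, wb)) = φs i (xb, wb)}
            {i | (⨆ i', φs i' (xb, wb)) = φs i (xb, wb)}) →
        y₂ ∈ Submodule.span ℝ (c '' {t | ⟪c t, mmUps ζs (xb, wb)⟫ = τ t}) →
        ContinuousLinearMap.adjoint (fderiv ℝ (fun x => mmXi φs (x, wb)) xb) y₁ +
          ContinuousLinearMap.adjoint (fderiv ℝ (fun x => mmUps ζs (x, wb)) xb) y₂ = 0 →
        y₁ = 0 ∧ y₂ = 0)) := by
  have hΞ : DifferentiableAt ℝ (fun x => mmXi φs (x, wb)) xb :=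
    differentiableAt_euclideanSpace_equiv_symm_prodMk_left
      fun i => (hφs i).differentiableAt two_ne_zero
  have hΥ : DifferentiableAt ℝ (fun x => mmUps ζs (x, wb)) xb :=
    differentiableAt_euclideanSpace_equiv_symm_prodMk_left
      fun j => (hζs j).differentiableAt two_ne_zero
  -- `mmPhi φs ζs` unfolds to `EuclideanSpace.sumEquivProd.symm (mmXi φs ·, mmUps ζs ·)`.
  have tfae := minimax_nondegeneracy_iff_general hl c τ hΞ hΥ hfeas hvb
  exact ⟨tfae.out 0 2, tfae.out 1 2⟩
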